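/- Let G be a finite abelian group satisfying Property P*: for every nonzero g ∈ G there is a minimal zero-sum sequence A_g of length D(G) with g ∈ supp(A_g). Then there exists A* ∈ B(G) such that every A ∈ B(G) with ρ(L(A)) = D(G)/2 satisfies c(A*A) ≤ 3, and hence L(A*A) is an interval with elasticity D(G)/2. -/

import Mathlib

def IsMinZS {G : Type*} [AddCommGroup G] (U : Multiset G) : Prop :=
  U ≠ 0 ∧ U.sum = 0 ∧ ∀ V ≤ U, V ≠ 0 → V.sum = 0 → V = U

noncomputable def DavC (G : Type*) [AddCommGroup G] : ℕ :=
  sSup {n | ∃ U : Multiset G, IsMinZS U ∧ U.card = n}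

def LSet {G : Type*} [AddCommGroup G] (A : Multiset G) : Set ℕ :=
  {k | ∃ l : Multiset (Multiset G), l.card = k ∧ (∀ U ∈ l, IsMinZS U) ∧ l.sum = A}

noncomputable def rhoSet (L : Set ℕ) : ℚ := ((sSup L : ℕ) : ℚ) / ((sInf L : ℕ) : ℚ)

def IsIntervalSet (L : Set ℕ) : Prop := L.Nonempty ∧ L = Set.Icc (sInf L) (sSup L)

def ZB {G : Type*} [AddCommGroup G] (A : Multiset G) : Set (Multiset (Multiset G)) :=
  {l | (∀ U ∈ l, IsMinZS U) ∧ l.sum = A}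

noncomputable def fdistB {G : Type*} [AddCommGroup G]
    (z z' : Multiset (Multiset G)) : ℕ :=
  letI := Classical.decEq (Multiset G)
  max (z - z ∩ z').card (z' - z ∩ z').card

def CatenaryLE {G : Type*} [AddCommGroup G] (A : Multiset G) (N : ℕ) : Prop :=
  ∀ z ∈ ZB A, ∀ z' ∈ ZB A, ∃ (n : ℕ) (f : ℕ → Multiset (Multiset G)),
    f 0 = z ∧ f n = z' ∧ (∀ i ≤ n, f i ∈ ZB A) ∧
    ∀ i < n, fdistB (f i) (f (i + 1)) ≤ N

/-!
Two factorizations of a sequence are joined by a `3`-chain as soon as they agree modulo the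
congruence generated by exchanging at most three atoms for at most three others. If every nonzero
element occurs often enough in a sequence, any pair `{g, -g}` can be split off from each of its
factorizations, up to this congruence. A supply of such pairs, common to all factorizations, then
acts as a catalyst: with its help one can split off `{s, -s}` from any factorization of the
remainder in which `s` and `-s` occur, and merge two elements `s`, `c` of the remainder into their
sum. The remainder shrinks at each step, so all factorizations are congruent, and the catenary
degree is at most `3`.

For the elasticity, count the length of a sequence with each `0` counted twice. Every atom then
weighs between `2` and `D(G)`, so elasticity `D(G) / 2` means that one factorization consists of
atoms of weight `2` and another of atoms of weight `D(G)`. This property passes to products, and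
Property P* provides sequences `A_g(-A_g)` that have it; a product of high powers of these is rich.
-/

section ZeroSum

variable {G : Type*} [AddCommGroup G]

variable (G) in
open Classical in
/-- The length of a sequence, with each occurrence of `0` counted twice. The only minimal zero-sum
sequence of length less than `2` being `{0}`, this makes every one of them weigh at least `2`. -/
noncomputable def weight : Multiset G →+ ℕ :=
  Multiset.cardHom + Multiset.countAddMonoidHom 0

theorem weight_eq_card {A : Multiset G} (h0 : (0 : G) ∉ A) : weight G A = A.card := by
  simp [weight, h0]

namespace IsMinZS

variable {g h k : G} {U V W : Multiset G}

theorem singleton_zero : IsMinZS ({0} : Multiset G) :=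
  ⟨by simp, by simp, fun _ hV hV0 _ => (Multiset.le_singleton.1 hV).resolve_left hV0⟩

theorem eq_singleton_zero (hU : IsMinZS U) (h0 : (0 : G) ∈ U) : U = {0} :=
  (hU.2.2 {0} (Multiset.singleton_le.2 h0) (by simp) (by simp)).symm

theorem eq_zero_of_zero_cons (hV : IsMinZS ((0 : G) ::ₘ V)) : V = 0 := by
  simpa only [← Multiset.cons_zero, Multiset.cons_inj_right] using
    hV.eq_singleton_zero (Multiset.mem_cons_self 0 V)

theorem two_le_weight (hU : IsMinZS U) : 2 ≤ weight G U := by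
  by_cases h0 : (0 : G) ∈ U
  · simp [hU.eq_singleton_zero h0, weight]
  rw [weight_eq_card h0]
  have hpos : 0 < U.card := Multiset.card_pos.2 hU.1
  by_contra hlt
  obtain ⟨a, rfl⟩ := Multiset.card_eq_one.1 (show U.card = 1 by omega)
  exact h0 (Multiset.mem_singleton.2 (by simpa using hU.2.1.symm))

theorem ne_zero_of_mem (hU : IsMinZS (g ::ₘ h ::ₘ W)) (hk : k ∈ g ::ₘ h ::ₘ W) : k ≠ 0 := by
  rintro rfl
  simpa using congrArg Multiset.card (hU.eq_singleton_zero hk)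

theorem eq_zero_of_le_tail (hU : IsMinZS (g ::ₘ V)) (hW : W ≤ V) (hs : W.sum = 0) : W = 0 := by
  by_contra hW0
  have hcard := Multiset.card_le_card hW
  rw [hU.2.2 W (hW.trans (Multiset.le_cons_self V g)) hW0 hs, Multiset.card_cons] at hcard
  omega

theorem eq_zero_of_add_eq_zero (hU : IsMinZS (g ::ₘ h ::ₘ W)) (hs : g + h = 0) : W = 0 := by
  have := hU.2.2 (g ::ₘ h ::ₘ 0) (by simp) (by simp) (by simpa using hs)
  simpa only [Multiset.cons_inj_right] using this.symm

theorem merge (hU : IsMinZS (g ::ₘ h ::ₘ W)) : IsMinZS ((g + h) ::ₘ W) := by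
  refine ⟨by simp, by simpa [add_assoc] using hU.2.1, fun X hX hX0 hs => ?_⟩
  by_cases hmem : g + h ∈ X
  · obtain ⟨X', rfl⟩ := Multiset.exists_cons_of_mem hmem
    have hX' : X' ≤ W := (Multiset.cons_le_cons_iff _).1 hX
    have := hU.2.2 (g ::ₘ h ::ₘ X') (by simpa using hX') (by simp) (by simpa [add_assoc] using hs)
    simp only [Multiset.cons_inj_right] at this
    rw [this]
  · have hXW : X ≤ W := (Multiset.le_cons_of_notMem hmem).1 hX
    exact absurd (hU.eq_zero_of_le_tail (hXW.trans (Multiset.le_cons_self W h)) hs) hX0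

theorem map_neg (hU : IsMinZS U) : IsMinZS (U.map Neg.neg) := by
  refine ⟨by simpa using hU.1, by rw [Multiset.sum_map_neg', hU.2.1, neg_zero],
    fun V hV hV0 hs => ?_⟩
  have hVU : V.map Neg.neg = U :=
    hU.2.2 _ (by simpa using Multiset.map_le_map (f := Neg.neg) hV) (by simpa using hV0)
      (by rw [Multiset.sum_map_neg', hs, neg_zero])
  simp [← hVU]

theorem card_le_natCard [Finite G] (hU : IsMinZS U) : U.card ≤ Nat.card G := by
  have := Fintype.ofFinite G
  obtain ⟨l, rfl⟩ : ∃ l : List G, (l : Multiset G) = U := Quot.exists_rep U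
  by_contra! hlt
  obtain ⟨i, j, hij, hsum⟩ := Fintype.exists_ne_map_eq_of_card_lt
    (fun i : Fin l.length => (l.take i).sum) (by simpa using hlt)
  wlog hlt : i < j generalizing i j
  · exact this j i hij.symm hsum.symm (hij.lt_or_gt.resolve_left hlt)
  have hs : ((l.take j).drop i).sum = 0 := by
    have := List.sum_take_add_sum_drop (l.take j) i
    rwa [List.take_take, min_eq_left (Fin.le_def.1 hlt.le), hsum, add_eq_left] at this
  have hlen : ((l.take j).drop i).length = j - i := by simp
  have heq := hU.2.2 ((l.take j).drop i : List G)
    ((List.drop_sublist _ _).trans (List.take_sublist _ _)).subperm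
    (by rw [Ne, ← Multiset.card_eq_zero, Multiset.coe_card]; omega) hs
  have hcard := congrArg Multiset.card heq
  simp only [Multiset.coe_card, hlen] at hcard
  omega

theorem card_le_davC [Finite G] (hU : IsMinZS U) : U.card ≤ DavC G :=
  le_csSup ⟨Nat.card G, by rintro _ ⟨V, hV, rfl⟩; exact hV.card_le_natCard⟩ ⟨U, hU, rfl⟩

end IsMinZS

theorem one_le_davC [Finite G] : 1 ≤ DavC G :=
  IsMinZS.singleton_zero.card_le_davC

variable {A B V : Multiset G} {z z' : Multiset (Multiset G)}

theorem zero_mem_ZB : (0 : Multiset (Multiset G)) ∈ ZB (0 : Multiset G) := by simp [ZB]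

theorem IsMinZS.singleton_mem_ZB (hA : IsMinZS A) : {A} ∈ ZB A := by simpa [ZB] using hA

theorem add_mem_ZB (hz : z ∈ ZB A) (hz' : z' ∈ ZB B) : z + z' ∈ ZB (A + B) := by
  refine ⟨fun U hU => ?_, by rw [Multiset.sum_add, hz.2, hz'.2]⟩
  exact (Multiset.mem_add.1 hU).elim (hz.1 U) (hz'.1 U)

theorem cons_mem_ZB_iff {U : Multiset G} :
    U ::ₘ z ∈ ZB A ↔ IsMinZS U ∧ ∃ B, z ∈ ZB B ∧ U + B = A := by
  simp only [ZB, Set.mem_ofPred_eq, Multiset.forall_mem_cons, Multiset.sum_cons]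
  exact ⟨fun h => ⟨h.1.1, _, ⟨h.1.2, rfl⟩, h.2⟩, fun ⟨hU, _, hz, h⟩ => ⟨⟨hU, hz.1⟩, hz.2 ▸ h⟩⟩

theorem sum_eq_zero_of_mem_ZB (hz : z ∈ ZB A) : A.sum = 0 := by
  rw [← hz.2, ← Multiset.coe_sumAddMonoidHom, map_multiset_sum]
  refine Multiset.sum_eq_zero fun x hx => ?_
  obtain ⟨U, hU, rfl⟩ := Multiset.mem_map.1 hx
  exact (hz.1 U hU).2.1

theorem eq_zero_of_mem_ZB_zero (hz : z ∈ ZB (0 : Multiset G)) : z = 0 := by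
  refine Multiset.eq_zero_of_forall_notMem fun U hU => (hz.1 U hU).1 ?_
  exact Multiset.le_zero.1 (hz.2 ▸ Multiset.le_sum_of_mem hU)

theorem exists_eq_cons_of_mem_ZB_cons {g : G} (hz : z ∈ ZB (g ::ₘ A)) :
    ∃ X z' C, IsMinZS (g ::ₘ X) ∧ z = {g ::ₘ X} + z' ∧ z' ∈ ZB C ∧ X + C = A := by
  have hjoin : g ∈ z.join := by
    rw [Multiset.join, hz.2]
    exact Multiset.mem_cons_self g A
  obtain ⟨U, hU, hg⟩ := Multiset.mem_join.1 hjoin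
  obtain ⟨z', rfl⟩ := Multiset.exists_cons_of_mem hU
  obtain ⟨X, rfl⟩ := Multiset.exists_cons_of_mem hg
  obtain ⟨hX, C, hz', hC⟩ := cons_mem_ZB_iff.1 hz
  exact ⟨X, z', C, hX, rfl, hz', by simpa using hC⟩

theorem exists_mem_ZB (hA : A.sum = 0) : ∃ z, z ∈ ZB A := by
  induction hn : A.card using Nat.strong_induction_on generalizing A with
  | _ n ih =>
  subst hn
  by_cases h0 : A = 0
  · exact ⟨0, h0 ▸ zero_mem_ZB⟩
  by_cases hmin : IsMinZS A
  · exact ⟨{A}, hmin.singleton_mem_ZB⟩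
  obtain ⟨V, hV, hV0, hVs, hVA⟩ : ∃ V ≤ A, V ≠ 0 ∧ V.sum = 0 ∧ V ≠ A := by
    by_contra! hV
    exact hmin ⟨h0, hA, hV⟩
  obtain ⟨W, rfl⟩ := Multiset.le_iff_exists_add.1 hV
  have hVpos := Multiset.card_pos.2 hV0
  have hWpos : 0 < W.card := Multiset.card_pos.2 (by rintro rfl; simp at hVA)
  rw [Multiset.card_add] at ih
  obtain ⟨z, hz⟩ := ih V.card (by omega) hVs rfl
  obtain ⟨w, hw⟩ := ih W.card (by omega) (by simpa [hVs] using hA) rfl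
  exact ⟨z + w, add_mem_ZB hz hw⟩

theorem card_le_add_of_mem_ZB_le (hV : ∀ X ≤ V, X.sum = 0 → X = 0) (hz : z ∈ ZB B)
    (hB : B ≤ A + V) : z.card ≤ A.card := by
  induction A using Multiset.induction_on generalizing z B with
  | empty =>
    obtain rfl := hV B (by simpa using hB) (sum_eq_zero_of_mem_ZB hz)
    simp [eq_zero_of_mem_ZB_zero hz]
  | cons g A ih =>
    by_cases hg : g ∈ B
    · obtain ⟨B', rfl⟩ := Multiset.exists_cons_of_mem hg
      obtain ⟨X, z', C, -, rfl, hz', rfl⟩ := exists_eq_cons_of_mem_ZB_cons hz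
      rw [Multiset.cons_add, Multiset.cons_le_cons_iff] at hB
      simpa using ih hz' ((Multiset.le_add_left C X).trans hB)
    · rw [Multiset.cons_add, Multiset.le_cons_of_notMem hg] at hB
      exact (ih hz hB).trans (by simp)

theorem card_le_of_mem_ZB (hz : z ∈ ZB A) : z.card ≤ A.card :=
  card_le_add_of_mem_ZB_le (V := 0) (by simp) hz (by simp)

theorem IsMinZS.card_le_of_mem_ZB_add {g : G} (hV : IsMinZS (g ::ₘ V)) (hz : z ∈ ZB (A + V)) :
    z.card ≤ A.card :=
  card_le_add_of_mem_ZB_le (fun _ => hV.eq_zero_of_le_tail) hz le_rfl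

theorem two_mul_card_le_weight (hz : z ∈ ZB A) : 2 * z.card ≤ weight G A := by
  rw [← hz.2, map_multiset_sum, mul_comm, ← smul_eq_mul, ← Multiset.card_map (weight G) z]
  exact Multiset.card_nsmul_le_sum
    (Multiset.forall_mem_map_iff.2 fun U hU => (hz.1 U hU).two_le_weight)

theorem card_le_one_of_mem_ZB (h0 : ∀ g ∈ A, g ≠ 0) (hA : A.card ≤ 3) (hz : z ∈ ZB A) :
    z.card ≤ 1 := by
  have := two_mul_card_le_weight hz
  rw [weight_eq_card fun h => h0 0 h rfl] at this
  omega

end ZeroSum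

section Chains

variable {G : Type*} [AddCommGroup G] {A B : Multiset G} {z z' : Multiset (Multiset G)} {N : ℕ}

variable (G) in
/-- The congruence on factorizations generated by exchanging at most `N` atoms for at most `N`
atoms with the same sum. Congruent factorizations are those joined by an `N`-chain. -/
def chainCon (N : ℕ) : AddCon (Multiset (Multiset G)) :=
  addConGen fun z z' => z.card ≤ N ∧ z'.card ≤ N ∧ ∃ A, z ∈ ZB A ∧ z' ∈ ZB A

/-- The class of a factorization modulo `chainCon`, in which chains of exchanges become
computations in a commutative monoid. -/
def chainClass (N : ℕ) : Multiset (Multiset G) →+ (chainCon G N).Quotient :=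
  (chainCon G N).mk'

theorem chainClass_eq_iff : chainClass N z = chainClass N z' ↔ chainCon G N z z' :=
  AddCon.eq _

theorem chainClass_eq (hz : z ∈ ZB A) (hz' : z' ∈ ZB A) (hN : z.card ≤ N) (hN' : z'.card ≤ N) :
    chainClass N z = chainClass N z' :=
  chainClass_eq_iff.2 (AddConGen.Rel.of _ _ ⟨hN, hN', A, hz, hz'⟩)

theorem chainClass_add_eq {C D : Multiset G} {w w' : Multiset (Multiset G)}
    (hz : z ∈ ZB A) (hz' : z' ∈ ZB B) (hw : w ∈ ZB C) (hw' : w' ∈ ZB D) (hsum : A + B = C + D)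
    (hN : z.card + z'.card ≤ N) (hN' : w.card + w'.card ≤ N) :
    chainClass N z + chainClass N z' = chainClass N w + chainClass N w' := by
  rw [← map_add, ← map_add]
  exact chainClass_eq (add_mem_ZB hz hz') (hsum ▸ add_mem_ZB hw hw') (by simpa) (by simpa)

theorem chainClass_eq_of_card_le (hz : z ∈ ZB A) (hz' : z' ∈ ZB A) (hA : A.card ≤ N) :
    chainClass N z = chainClass N z' :=
  chainClass_eq hz hz' ((card_le_of_mem_ZB hz).trans hA) ((card_le_of_mem_ZB hz').trans hA)

theorem add_mem_ZB_congr (h : chainCon G N z z') :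
    ∀ c : Multiset (Multiset G), c + z ∈ ZB A ↔ c + z' ∈ ZB A := by
  induction h with
  | of z z' h =>
    obtain ⟨-, -, B, hz, hz'⟩ := h
    intro c
    simp only [ZB, Set.mem_ofPred_eq, Multiset.mem_add, or_imp, forall_and, Multiset.sum_add,
      hz.2, hz'.2, and_iff_left hz.1, and_iff_left hz'.1]
  | refl => exact fun _ => Iff.rfl
  | symm _ ih => exact fun c => (ih c).symm
  | trans _ _ ih₁ ih₂ => exact fun c => (ih₁ c).trans (ih₂ c)
  | @add z z' w w' _ _ ih₁ ih₂ =>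
    intro c
    rw [← add_assoc, ih₂ (c + z), add_right_comm, ih₁ (c + w'), add_right_comm, add_assoc]

theorem fdistB_comm (z z' : Multiset (Multiset G)) : fdistB z z' = fdistB z' z := by
  simp only [fdistB, max_comm, Multiset.inter_comm]

theorem fdistB_add_left_le (c : Multiset (Multiset G)) (hz : z.card ≤ N) (hz' : z'.card ≤ N) :
    fdistB (c + z) (c + z') ≤ N := by
  let := Classical.decEq (Multiset G)
  have hle : ∀ x y : Multiset (Multiset G), (c + x - (c + x) ∩ (c + y)).card ≤ x.card := by
    intro x y
    rw [← Multiset.add_inter_distrib, add_tsub_add_eq_tsub_left]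
    exact Multiset.card_le_card tsub_le_self
  rw [fdistB, max_le_iff]
  exact ⟨(hle z z').trans hz, Multiset.inter_comm (c + z') (c + z) ▸ (hle z' z).trans hz'⟩

theorem reflTransGen_of_chainCon (h : chainCon G N z z') :
    ∀ c : Multiset (Multiset G), c + z ∈ ZB A →
      Relation.ReflTransGen (fun x y => x ∈ ZB A ∧ y ∈ ZB A ∧ fdistB x y ≤ N) (c + z) (c + z') := by
  induction h with
  | of z z' h =>
    exact fun c hc => .single ⟨hc, (add_mem_ZB_congr (AddConGen.Rel.of _ _ h) c).1 hc,
      fdistB_add_left_le c h.1 h.2.1⟩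
  | refl => exact fun _ _ => .refl
  | symm h ih =>
    have : Std.Symm fun x y : Multiset (Multiset G) => x ∈ ZB A ∧ y ∈ ZB A ∧ fdistB x y ≤ N :=
      ⟨fun x y hxy => ⟨hxy.2.1, hxy.1, fdistB_comm x y ▸ hxy.2.2⟩⟩
    exact fun c hc => Relation.ReflTransGen.stdSymm.symm _ _ (ih c ((add_mem_ZB_congr h c).2 hc))
  | trans h _ ih₁ ih₂ =>
    exact fun c hc => (ih₁ c hc).trans (ih₂ c ((add_mem_ZB_congr h c).1 hc))
  | @add z z' w w' _ h ih₁ ih₂ =>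
    intro c hc
    rw [← add_assoc] at hc ⊢
    have hc' := (add_mem_ZB_congr h (c + z)).1 hc
    refine (ih₂ _ hc).trans ?_
    rw [add_right_comm] at hc'
    rw [← add_assoc, add_right_comm c z, add_right_comm c z']
    exact ih₁ _ hc'

theorem exists_seq_of_reflTransGen {α : Type*} {r : α → α → Prop} {a b : α}
    (h : Relation.ReflTransGen r a b) :
    ∃ (n : ℕ) (f : ℕ → α), f 0 = a ∧ f n = b ∧ ∀ i < n, r (f i) (f (i + 1)) := by
  induction h using Relation.ReflTransGen.head_induction_on with
  | refl => exact ⟨0, fun _ => b, rfl, rfl, by simp⟩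
  | @head a c hac _ ih =>
    obtain ⟨n, f, hf0, hfn, hf⟩ := ih
    refine ⟨n + 1, fun i => i.casesOn a f, rfl, hfn, ?_⟩
    rintro (_ | i) hi
    · simpa [hf0] using hac
    · exact hf i (by omega)

theorem catenaryLE_of_chainClass_eq
    (h : ∀ z ∈ ZB A, ∀ z' ∈ ZB A, chainClass N z = chainClass N z') : CatenaryLE A N := by
  intro z hz z' hz'
  have hchain := reflTransGen_of_chainCon (chainClass_eq_iff.1 (h z hz z' hz')) 0 (by simpa)
  obtain ⟨n, f, hf0, hfn, hf⟩ := exists_seq_of_reflTransGen hchain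
  rw [zero_add] at hf0 hfn
  refine ⟨n, f, hf0, hfn, fun i hi => ?_, fun i hi => (hf i hi).2.2⟩
  obtain rfl | hlt := hi.eq_or_lt
  · exact hfn ▸ hz'
  · exact (hf i hlt).1

end Chains

section Rich

variable {G : Type*} [AddCommGroup G] [DecidableEq G] {A B T : Multiset G} {m n : ℕ}

/-- Every nonzero element of the group occurs at least `n` times in the sequence `A`. -/
def IsRich (n : ℕ) (A : Multiset G) : Prop := ∀ g ≠ 0, n ≤ A.count g

theorem IsRich.mono (h : IsRich n A) (hmn : m ≤ n) (hAB : A ≤ B) : IsRich m B :=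
  fun g hg => (hmn.trans (h g hg)).trans (Multiset.count_le_of_le g hAB)

theorem IsRich.of_add (h : IsRich n (T + B)) (hT : m + T.card ≤ n) : IsRich m B := by
  intro g hg
  have hn := h g hg
  have hle := Multiset.count_le_card g T
  rw [Multiset.count_add] at hn
  omega

end Rich

section Catalysis

variable {G : Type*} [AddCommGroup G]
variable {A B C X Y : Multiset G} {E p q t x y z : Multiset (Multiset G)} {c g h s : G}

local notation "κ" => chainClass 3

theorem exists_merge_of_zero (hp : p ∈ ZB {g, -g}) (ht : t ∈ ZB {0, g, -g})
    (hx : x ∈ ZB (0 ::ₘ A)) : ∃ y ∈ ZB A, κ p + κ x = κ t + κ y := by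
  obtain ⟨X, y, C, hX, rfl, hy, rfl⟩ := exists_eq_cons_of_mem_ZB_cons hx
  obtain rfl := hX.eq_zero_of_zero_cons
  refine ⟨y, by simpa using hy, ?_⟩
  rw [map_add, ← add_assoc, ← map_add,
    chainClass_eq_of_card_le (add_mem_ZB hp hX.singleton_mem_ZB) ?_ (by simp)]
  simpa [← Multiset.singleton_add, add_comm, add_left_comm] using ht

theorem chainClass_pair_add_eq (hX : IsMinZS (s ::ₘ c ::ₘ X)) (hsc : s + c ≠ 0)
    (hp : p ∈ ZB {s + c, -(s + c)}) (ht : t ∈ ZB {s, c, -(s + c)}) :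
    κ p + κ {s ::ₘ c ::ₘ X} = κ t + κ {(s + c) ::ₘ X} := by
  have hs : s ≠ 0 := hX.ne_zero_of_mem (by simp)
  have hc : c ≠ 0 := hX.ne_zero_of_mem (by simp)
  have hp1 : p.card ≤ 1 := card_le_one_of_mem_ZB (by simp [hsc, -neg_add_rev]) (by simp) hp
  have ht1 : t.card ≤ 1 :=
    card_le_one_of_mem_ZB (by simp [hs, hc, hsc, -neg_add_rev]) (by simp) ht
  refine chainClass_add_eq hp hX.singleton_mem_ZB ht hX.merge.singleton_mem_ZB ?_
    (by simp; omega) (by simp; omega)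
  simp only [Multiset.insert_eq_cons, ← Multiset.singleton_add]
  abel

theorem exists_chainClass_triple_add_eq (hY : IsMinZS (-s ::ₘ Y)) (hs : s ≠ 0) (hc : c ≠ 0)
    (hsc : s + c ≠ 0) (hp : p ∈ ZB {s, -s}) (ht : t ∈ ZB {s, c, -(s + c)}) :
    ∃ w ∈ ZB (-(s + c) ::ₘ c ::ₘ Y), κ t + κ {-s ::ₘ Y} = κ p + κ w := by
  obtain ⟨w, hw⟩ := exists_mem_ZB (A := -(s + c) ::ₘ c ::ₘ Y) <| by
    rw [← hY.2.1, Multiset.sum_cons, Multiset.sum_cons, Multiset.sum_cons]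
    abel
  have hp1 : p.card ≤ 1 := card_le_one_of_mem_ZB (by simp [hs]) (by simp) hp
  have ht1 : t.card ≤ 1 :=
    card_le_one_of_mem_ZB (by simp [hs, hc, hsc, -neg_add_rev]) (by simp) ht
  have hw2 : w.card ≤ 2 :=
    IsMinZS.card_le_of_mem_ZB_add (A := {-(s + c), c}) hY (by simpa using hw)
  refine ⟨w, hw, chainClass_add_eq ht hY.singleton_mem_ZB hp hw ?_ (by simp; omega) (by omega)⟩
  simp only [Multiset.insert_eq_cons, ← Multiset.singleton_add]
  abel

theorem exists_chainClass_pair_pair_add_eq (hX : IsMinZS (s ::ₘ X)) (hs : s ≠ 0)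
    (hc : c ≠ 0) (hsc : s + c ≠ 0) (hp : p ∈ ZB {s + c, -(s + c)})
    (hq : q ∈ ZB {c, -c}) (ht : t ∈ ZB {s, c, -(s + c)}) :
    ∃ x ∈ ZB ({s + c, -c} + X), κ p + κ q + κ {s ::ₘ X} = κ t + κ x := by
  obtain ⟨x, hx⟩ := exists_mem_ZB (A := {s + c, -c} + X) (by simpa using hX.2.1)
  have hp1 : p.card ≤ 1 := card_le_one_of_mem_ZB (by simp [hsc, -neg_add_rev]) (by simp) hp
  have hq1 : q.card ≤ 1 := card_le_one_of_mem_ZB (by simp [hc]) (by simp) hq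
  have ht1 : t.card ≤ 1 :=
    card_le_one_of_mem_ZB (by simp [hs, hc, hsc, -neg_add_rev]) (by simp) ht
  have hx2 : x.card ≤ 2 := hX.card_le_of_mem_ZB_add hx
  rw [← map_add]
  refine ⟨x, hx, chainClass_add_eq (add_mem_ZB hp hq) hX.singleton_mem_ZB ht hx ?_
    (by simp; omega) (by omega)⟩
  simp only [Multiset.insert_eq_cons, ← Multiset.singleton_add]
  abel

variable [Finite G] [DecidableEq G]

-- Richness supplies an atom `(h + k)V` elsewhere in the factorization; trading it against `ghkX`
-- for `g(h + k)X` and at most two atoms of sum `hkV` shortens the atom through `g`.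
theorem exists_pull_pair_of_isMinZS (hp : p ∈ ZB {g, -g})
    (hX : IsMinZS (g ::ₘ h ::ₘ X)) (hz : z ∈ ZB C)
    (hA : IsRich (DavC G + 1) (g ::ₘ h ::ₘ X + C)) :
    ∃ B, {g, -g} + B = g ::ₘ h ::ₘ X + C ∧
      ∃ z' ∈ ZB B, κ {g ::ₘ h ::ₘ X} + κ z = κ p + κ z' := by
  induction X using Multiset.induction_on generalizing h C z with
  | empty =>
    obtain rfl : h = -g := eq_neg_of_add_eq_zero_right (by simpa using hX.2.1)
    refine ⟨C, by simp, z, hz, ?_⟩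
    rw [chainClass_eq_of_card_le hp hX.singleton_mem_ZB (by simp)]
  | cons k X ih =>
  have hX' : IsMinZS (h ::ₘ k ::ₘ g ::ₘ X) := by
    rwa [Multiset.cons_swap k, Multiset.cons_swap h]
  have hmerge : IsMinZS (g ::ₘ (h + k) ::ₘ X) := Multiset.cons_swap g (h + k) X ▸ hX'.merge
  have hC : h + k ∈ C := by
    have hcount := hA (h + k) fun h0 => by simpa using hX'.eq_zero_of_add_eq_zero h0
    have hle := (Multiset.count_le_card (h + k) _).trans hX.card_le_davC
    rw [Multiset.count_add] at hcount
    exact Multiset.count_pos.1 (by omega)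
  obtain ⟨C, rfl⟩ := Multiset.exists_cons_of_mem hC
  obtain ⟨V, w, C, hV, rfl, hw, rfl⟩ := exists_eq_cons_of_mem_ZB_cons hz
  obtain ⟨x, hx⟩ := exists_mem_ZB (A := {h, k} + V) (by simpa [add_assoc] using hV.2.1)
  have hexch : κ {g ::ₘ h ::ₘ k ::ₘ X} + κ {(h + k) ::ₘ V} = κ {g ::ₘ (h + k) ::ₘ X} + κ x := by
    refine chainClass_add_eq hX.singleton_mem_ZB hV.singleton_mem_ZB hmerge.singleton_mem_ZB hx ?_
      (by simp) ?_
    · simp only [Multiset.insert_eq_cons, ← Multiset.singleton_add]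
      abel
    · simpa [add_comm, Nat.lt_succ_iff] using hV.card_le_of_mem_ZB_add hx
  have hsum : g ::ₘ (h + k) ::ₘ X + ({h, k} + V + C) =
      g ::ₘ h ::ₘ k ::ₘ X + (h + k) ::ₘ (V + C) := by
    simp only [Multiset.insert_eq_cons, ← Multiset.singleton_add]
    abel
  obtain ⟨B, hB, z', hz', heq⟩ := ih hmerge (add_mem_ZB hx hw) (by rwa [hsum])
  refine ⟨B, hB.trans hsum, z', hz', ?_⟩
  rw [← heq, map_add, map_add, ← add_assoc, ← add_assoc, hexch]

theorem exists_pull_pair (hg : g ≠ 0) (hp : p ∈ ZB {g, -g}) (hz : z ∈ ZB A)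
    (hA : IsRich (DavC G + 1) A) : ∃ B, {g, -g} + B = A ∧ ∃ z' ∈ ZB B, κ z = κ p + κ z' := by
  obtain ⟨A, rfl⟩ := Multiset.exists_cons_of_mem
    (Multiset.count_pos.1 ((Nat.succ_pos _).trans_le (hA g hg)))
  obtain ⟨X, w, C, hX, rfl, hw, rfl⟩ := exists_eq_cons_of_mem_ZB_cons hz
  rw [map_add]
  induction X using Multiset.induction_on with
  | empty => exact absurd (by simpa using hX.2.1) hg
  | cons h X => simpa using exists_pull_pair_of_isMinZS hp hX hw (by simpa using hA)

theorem exists_extract_of_isMinZS (hX : IsMinZS (s ::ₘ X)) (hY : IsMinZS (-s ::ₘ Y))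
    (hp : p ∈ ZB {s, -s}) (hE : E ∈ ZB B) (hB : IsRich (DavC G + 1 + 2 * X.card) B) :
    ∃ y ∈ ZB (X + Y), κ E + κ {s ::ₘ X} + κ {-s ::ₘ Y} = κ E + κ p + κ y := by
  induction X using Multiset.induction_on generalizing s Y p B E with
  | empty =>
    obtain rfl : s = 0 := by simpa using hX.2.1
    obtain rfl : Y = 0 := (neg_zero (G := G) ▸ hY).eq_zero_of_zero_cons
    refine ⟨0, zero_mem_ZB, ?_⟩
    rw [add_assoc, add_assoc, chainClass_add_eq hX.singleton_mem_ZB hY.singleton_mem_ZB hp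
      zero_mem_ZB (by simp) (by simp) ((card_le_of_mem_ZB hp).trans (by simp))]
  | cons c X ih =>
  obtain hsc | hsc := eq_or_ne (s + c) 0
  · obtain rfl := hX.eq_zero_of_add_eq_zero hsc
    obtain rfl : c = -s := eq_neg_of_add_eq_zero_right hsc
    refine ⟨{-s ::ₘ Y}, by simpa using hY.singleton_mem_ZB, ?_⟩
    rw [chainClass_eq_of_card_le hp hX.singleton_mem_ZB (by simp)]
  have hs : s ≠ 0 := hX.ne_zero_of_mem (by simp)
  have hc : c ≠ 0 := hX.ne_zero_of_mem (by simp)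
  obtain ⟨q, hq⟩ := exists_mem_ZB (A := {s + c, -(s + c)}) (by simp)
  obtain ⟨t, ht⟩ := exists_mem_ZB (A := {s, c, -(s + c)}) (by simp)
  obtain ⟨B, rfl, E', hE', hEq⟩ := exists_pull_pair hsc hq hE (hB.mono (by omega) le_rfl)
  have hst := chainClass_pair_add_eq hX hsc hq ht
  obtain ⟨w, hw, htp⟩ := exists_chainClass_triple_add_eq hY hs hc hsc hp ht
  obtain ⟨Y', w', C, hY', rfl, hw', hYC⟩ := exists_eq_cons_of_mem_ZB_cons hw
  obtain ⟨y, hy, hyq⟩ := ih hX.merge hY' hq hE' (hB.of_add (by simp; omega))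
  refine ⟨y + w', ?_, ?_⟩
  · convert add_mem_ZB hy hw' using 1
    rw [add_assoc X, hYC]
    simp
  · rw [map_add] at htp ⊢
    calc κ E + κ {s ::ₘ c ::ₘ X} + κ {-s ::ₘ Y}
        = κ E' + (κ q + κ {s ::ₘ c ::ₘ X}) + κ {-s ::ₘ Y} := by rw [hEq]; abel
      _ = κ E' + κ {(s + c) ::ₘ X} + (κ t + κ {-s ::ₘ Y}) := by rw [hst]; abel
      _ = (κ E' + κ {(s + c) ::ₘ X} + κ {-(s + c) ::ₘ Y'}) + κ p + κ w' := by rw [htp]; abel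
      _ = κ E + κ p + (κ y + κ w') := by rw [hyq, hEq]; abel

theorem exists_extract (hp : p ∈ ZB {s, -s}) (hE : E ∈ ZB B) (hB : IsRich (3 * DavC G + 1) B)
    (hx : x ∈ ZB (s ::ₘ -s ::ₘ A)) : ∃ y ∈ ZB A, κ E + κ x = κ E + κ p + κ y := by
  obtain ⟨X, w, C, hX, rfl, hw, hC⟩ := exists_eq_cons_of_mem_ZB_cons hx
  obtain hmem | hmem := Multiset.mem_add.1 (hC ▸ Multiset.mem_cons_self (-s) A : -s ∈ X + C)
  · obtain ⟨X, rfl⟩ := Multiset.exists_cons_of_mem hmem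
    obtain rfl := hX.eq_zero_of_add_eq_zero (add_neg_cancel s)
    obtain rfl : C = A := by simpa using hC
    refine ⟨w, hw, ?_⟩
    rw [map_add, chainClass_eq_of_card_le hp hX.singleton_mem_ZB (by simp), add_assoc]
  · obtain ⟨C, rfl⟩ := Multiset.exists_cons_of_mem hmem
    obtain ⟨Y, v, C, hY, rfl, hv, rfl⟩ := exists_eq_cons_of_mem_ZB_cons hw
    have hXD : X.card + 1 ≤ DavC G := by simpa using hX.card_le_davC
    obtain ⟨y, hy, hyE⟩ := exists_extract_of_isMinZS hX hY hp hE (hB.mono (by omega) le_rfl)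
    refine ⟨y + v, ?_, by simp only [map_add, ← add_assoc, hyE]⟩
    have hA : X + Y + C = A := by simpa [add_assoc] using hC
    exact hA ▸ add_mem_ZB hy hv

theorem exists_merge (hsc : s + c ≠ 0) (hp : p ∈ ZB {s + c, -(s + c)})
    (ht : t ∈ ZB {s, c, -(s + c)}) (hE : E ∈ ZB B) (hB : IsRich (3 * DavC G + 3) B)
    (hx : x ∈ ZB (s ::ₘ c ::ₘ A)) :
    ∃ y ∈ ZB ((s + c) ::ₘ A), κ E + κ p + κ x = κ E + κ t + κ y := by
  obtain rfl | hs := eq_or_ne s 0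
  · rw [zero_add] at hp ht ⊢
    obtain ⟨y, hy, hpt⟩ := exists_merge_of_zero hp ht hx
    exact ⟨y, hy, by rw [add_assoc, hpt, add_assoc]⟩
  obtain rfl | hc := eq_or_ne c 0
  · rw [add_zero] at hp ht ⊢
    rw [Multiset.cons_swap] at hx
    obtain ⟨y, hy, hpt⟩ := exists_merge_of_zero hp (by
      simpa only [Multiset.insert_eq_cons, Multiset.cons_swap s 0] using ht) hx
    exact ⟨y, hy, by rw [add_assoc, hpt, add_assoc]⟩
  obtain ⟨X, x₀, C, hX, rfl, hx₀, hXC⟩ := exists_eq_cons_of_mem_ZB_cons hx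
  obtain ⟨q, hq⟩ := exists_mem_ZB (A := {c, -c}) (by simp)
  obtain ⟨x₁, hx₁, hexch⟩ := exists_chainClass_pair_pair_add_eq hX hs hc hsc hp hq ht
  obtain ⟨B, rfl, E', hE', hEq⟩ := exists_pull_pair hc hq hE (hB.mono (by omega) le_rfl)
  have hsum : {s + c, -c} + X + C = c ::ₘ -c ::ₘ (s + c) ::ₘ A := by
    rw [add_assoc, hXC]
    simp only [Multiset.insert_eq_cons, ← Multiset.singleton_add]
    abel
  obtain ⟨y, hy, hyE⟩ := exists_extract hq hE' (hB.of_add (by simp))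
    (hsum ▸ add_mem_ZB hx₁ hx₀)
  refine ⟨y, hy, ?_⟩
  rw [map_add] at hyE ⊢
  calc κ E + κ p + (κ {s ::ₘ X} + κ x₀)
      = κ E' + (κ p + κ q + κ {s ::ₘ X}) + κ x₀ := by rw [hEq]; abel
    _ = κ t + (κ E' + (κ x₁ + κ x₀)) := by rw [hexch]; abel
    _ = κ E + κ t + κ y := by rw [hyE, hEq]; abel

-- Merging `c` into `s` takes the pair `s + c, -(s + c)` out of `B` and puts `s, c, -(s + c)` back:
-- `B` loses `s + c` and gains `s`, so it is `s ::ₘ B` whose richness is preserved.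
theorem chainClass_add_eq_of_isRich_cons (hE : E ∈ ZB B) (hx : x ∈ ZB (s ::ₘ A))
    (hy : y ∈ ZB (s ::ₘ A)) (hB : IsRich (3 * DavC G + 6) (s ::ₘ B)) :
    κ E + κ x = κ E + κ y := by
  induction A using Multiset.strongInductionOn generalizing s B E x y with
  | ih A ih =>
  obtain rfl | ⟨c, hc⟩ := A.empty_or_exists_mem
  · rw [chainClass_eq_of_card_le hx hy (by simp)]
  obtain ⟨A, rfl⟩ := Multiset.exists_cons_of_mem hc
  obtain ⟨p, hp⟩ := exists_mem_ZB (A := {s + c, -(s + c)}) (by simp)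
  have hEB : IsRich (3 * DavC G + 5) B := by
    rw [← Multiset.singleton_add] at hB
    exact hB.of_add (by simp)
  obtain hsc | hsc := eq_or_ne (s + c) 0
  · obtain rfl : c = -s := eq_neg_of_add_eq_zero_right hsc
    obtain ⟨q, hq⟩ := exists_mem_ZB (A := {s, -s}) (by simp)
    obtain ⟨x', hx', hxE⟩ := exists_extract hq hE (hEB.mono (by omega) le_rfl) hx
    obtain ⟨y', hy', hyE⟩ := exists_extract hq hE (hEB.mono (by omega) le_rfl) hy
    rw [hxE, hyE]
    obtain rfl | ⟨g, hg⟩ := A.empty_or_exists_mem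
    · rw [eq_zero_of_mem_ZB_zero hx', eq_zero_of_mem_ZB_zero hy']
    obtain ⟨A, rfl⟩ := Multiset.exists_cons_of_mem hg
    rw [← map_add]
    refine ih A ((Multiset.lt_cons_self A g).trans (Multiset.lt_cons_self _ _)) (add_mem_ZB hE hq)
      hx' hy' (hB.mono le_rfl (Multiset.le_iff_exists_add.2 ⟨{g, -s}, ?_⟩))
    simp only [Multiset.insert_eq_cons, ← Multiset.singleton_add]
    abel
  · obtain ⟨t, ht⟩ := exists_mem_ZB (A := {s, c, -(s + c)}) (by simp)
    obtain ⟨B, rfl, E', hE', hEp⟩ := exists_pull_pair hsc hp hE (hEB.mono (by omega) le_rfl)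
    have hE'B : IsRich (3 * DavC G + 3) B := hEB.of_add (by simp)
    obtain ⟨x', hx', hxE⟩ := exists_merge hsc hp ht hE' hE'B hx
    obtain ⟨y', hy', hyE⟩ := exists_merge hsc hp ht hE' hE'B hy
    rw [hEp, add_comm (κ p), hxE, hyE, ← map_add]
    refine ih A (Multiset.lt_cons_self A c) (add_mem_ZB hE' ht) hx' hy'
      (hB.mono le_rfl (Multiset.le_iff_exists_add.2 ⟨{c}, ?_⟩))
    simp only [Multiset.insert_eq_cons, ← Multiset.singleton_add]
    abel

theorem exists_common_part (T : Multiset G) (hT : ∀ g ∈ T, g ≠ 0) :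
    ∃ B, T ≤ B ∧ ∃ E ∈ ZB B, ∀ A, IsRich (DavC G + 1 + 2 * T.card) A → ∀ z ∈ ZB A,
      ∃ A', B + A' = A ∧ ∃ x ∈ ZB A', κ z = κ E + κ x := by
  induction T using Multiset.induction_on with
  | empty => exact ⟨0, le_rfl, 0, zero_mem_ZB, fun A _ z hz => ⟨A, zero_add A, z, hz, by simp⟩⟩
  | cons g T ih =>
  rw [Multiset.forall_mem_cons] at hT
  obtain ⟨B, hTB, E, hE, hpull⟩ := ih hT.2
  obtain ⟨p, hp⟩ := exists_mem_ZB (A := {g, -g}) (by simp)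
  refine ⟨{g, -g} + B, ?_, p + E, add_mem_ZB hp hE, fun A hA z hz => ?_⟩
  · rw [Multiset.insert_eq_cons, Multiset.cons_add, Multiset.cons_le_cons_iff]
    exact hTB.trans (Multiset.le_add_left B _)
  · obtain ⟨A, rfl, z', hz', hzp⟩ := exists_pull_pair hT.1 hp hz (hA.mono (by omega) le_rfl)
    obtain ⟨A', rfl, x, hx, hzE⟩ := hpull A (hA.of_add (by simp; omega)) z' hz'
    exact ⟨A', add_assoc _ _ _, x, hx, by rw [hzp, hzE, map_add, add_assoc]⟩

variable (G) in
theorem exists_forall_isRich_catenaryLE : ∃ n, ∀ A : Multiset G, IsRich n A → CatenaryLE A 3 := by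
  have := Fintype.ofFinite G
  let T := (3 * DavC G + 6) • (Finset.univ.erase (0 : G)).val
  have hT : ∀ g ∈ T, g ≠ 0 := fun g hg => Finset.ne_of_mem_erase (Multiset.mem_of_mem_nsmul hg)
  obtain ⟨B, hTB, E, hE, hpull⟩ := exists_common_part T hT
  have hB : IsRich (3 * DavC G + 6) B := fun g hg => by
    refine le_trans ?_ (Multiset.count_le_of_le g hTB)
    have hg' : g ∈ (Finset.univ.erase (0 : G)).val := Finset.mem_erase.2 ⟨hg, Finset.mem_univ g⟩
    rw [Multiset.count_nsmul, Multiset.count_eq_one_of_mem (Finset.nodup _) hg', mul_one]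
  refine ⟨DavC G + 1 + 2 * T.card, fun A hA => catenaryLE_of_chainClass_eq fun z hz z' hz' => ?_⟩
  obtain ⟨A', rfl, x, hx, hzE⟩ := hpull A hA z hz
  obtain ⟨A'', hA', y, hy, hyE⟩ := hpull _ hA z' hz'
  obtain rfl := add_left_cancel hA'
  rw [hzE, hyE]
  obtain rfl | ⟨s, hs⟩ := A''.empty_or_exists_mem
  · rw [eq_zero_of_mem_ZB_zero hx, eq_zero_of_mem_ZB_zero hy]
  · obtain ⟨A, rfl⟩ := Multiset.exists_cons_of_mem hs
    exact chainClass_add_eq_of_isRich_cons hE hx hy (hB.mono le_rfl (Multiset.le_cons_self B s))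

end Catalysis

section Lengths

variable {G : Type*} [AddCommGroup G] {A : Multiset G} {z z' : Multiset (Multiset G)} {k : ℕ}

theorem mem_LSet_iff : k ∈ LSet A ↔ ∃ z ∈ ZB A, z.card = k :=
  ⟨fun ⟨z, hk, hz, hA⟩ => ⟨z, ⟨hz, hA⟩, hk⟩, fun ⟨z, hz, hk⟩ => ⟨z, hk, hz.1, hz.2⟩⟩

theorem LSet_nonempty (hA : A.sum = 0) : (LSet A).Nonempty := by
  obtain ⟨z, hz⟩ := exists_mem_ZB hA
  exact ⟨z.card, mem_LSet_iff.2 ⟨z, hz, rfl⟩⟩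

theorem bddAbove_LSet : BddAbove (LSet A) := by
  refine ⟨A.card, fun k hk => ?_⟩
  obtain ⟨z, hz, rfl⟩ := mem_LSet_iff.1 hk
  exact card_le_of_mem_ZB hz

theorem card_le_card_add_one_of_card_le_three (hz : z ∈ ZB A) (hz' : z' ∈ ZB A) (h3 : z'.card ≤ 3) :
    z'.card ≤ z.card + 1 := by
  obtain h0 | h1 | h2 : z.card = 0 ∨ z.card = 1 ∨ 2 ≤ z.card := by omega
  · obtain rfl := Multiset.card_eq_zero.1 h0
    obtain rfl : A = 0 := hz.2.symm
    simp [eq_zero_of_mem_ZB_zero hz']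
  · obtain ⟨U, rfl⟩ := Multiset.card_eq_one.1 h1
    obtain rfl : U = A := by simpa using hz.2
    have hU : IsMinZS U := hz.1 U (Multiset.mem_singleton_self U)
    obtain ⟨g, hg⟩ := Multiset.exists_mem_of_ne_zero hU.1
    obtain ⟨X, rfl⟩ := Multiset.exists_cons_of_mem hg
    exact (hU.card_le_of_mem_ZB_add (A := {g}) hz').trans (by simp)
  · omega

theorem card_le_card_add_one_of_fdistB_le (hz : z ∈ ZB A) (hz' : z' ∈ ZB A)
    (h3 : fdistB z z' ≤ 3) : z'.card ≤ z.card + 1 := by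
  let := Classical.decEq (Multiset G)
  set c := z ∩ z'
  have hx : c + (z - c) = z := add_tsub_cancel_of_le Multiset.inter_le_left
  have hy : c + (z' - c) = z' := add_tsub_cancel_of_le Multiset.inter_le_right
  have hsum : (z' - c).sum = (z - c).sum := by
    rw [← add_right_inj c.sum, ← Multiset.sum_add, ← Multiset.sum_add, hx, hy, hz.2, hz'.2]
  have hle : (z' - c).card ≤ (z - c).card + 1 :=
    card_le_card_add_one_of_card_le_three
      ⟨fun U hU => hz.1 U (Multiset.mem_of_le tsub_le_self hU), rfl⟩
      ⟨fun U hU => hz'.1 U (Multiset.mem_of_le tsub_le_self hU), hsum⟩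
      ((le_max_right _ _).trans h3)
  rw [← hx, ← hy, Multiset.card_add, Multiset.card_add]
  omega

theorem exists_eq_of_succ_le_add_one {f : ℕ → ℕ} {n : ℕ} (hf : ∀ i < n, f (i + 1) ≤ f i + 1)
    (h0 : f 0 ≤ k) (hn : k ≤ f n) : ∃ i ≤ n, f i = k := by
  induction n with
  | zero => exact ⟨0, le_rfl, h0.antisymm hn⟩
  | succ n ih =>
    obtain hk | hk := le_or_gt k (f n)
    · obtain ⟨i, hi, hik⟩ := ih (fun i hi => hf i (by omega)) hk
      exact ⟨i, by omega, hik⟩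
    · exact ⟨n + 1, le_rfl, (by have := hf n (by omega); omega)⟩

theorem isIntervalSet_LSet (hA : A.sum = 0) (hcat : CatenaryLE A 3) : IsIntervalSet (LSet A) := by
  refine ⟨LSet_nonempty hA, subset_antisymm
    (fun k hk => ⟨Nat.sInf_le hk, le_csSup bddAbove_LSet hk⟩) fun k hk => ?_⟩
  obtain ⟨z, hz, hzmin⟩ := mem_LSet_iff.1 (Nat.sInf_mem (LSet_nonempty hA))
  obtain ⟨z', hz', hzmax⟩ := mem_LSet_iff.1 (Nat.sSup_mem (LSet_nonempty hA) bddAbove_LSet)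
  obtain ⟨n, f, rfl, rfl, hf, hdist⟩ := hcat z hz z' hz'
  obtain ⟨i, hi, hik⟩ := exists_eq_of_succ_le_add_one (f := fun i => (f i).card)
    (fun i hi => card_le_card_add_one_of_fdistB_le (hf i hi.le) (hf (i + 1) hi) (hdist i hi))
    (hzmin.trans_le hk.1) (hk.2.trans_eq hzmax.symm)
  exact mem_LSet_iff.2 ⟨f i, hf i hi, hik⟩

end Lengths

section Elasticity

variable {G : Type*} [AddCommGroup G] {A U : Multiset G} {z : Multiset (Multiset G)}

theorem IsMinZS.weight_le_davC [Finite G] (hD : 2 ≤ DavC G) (hU : IsMinZS U) :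
    weight G U ≤ DavC G := by
  by_cases h0 : (0 : G) ∈ U
  · simpa [hU.eq_singleton_zero h0, weight] using hD
  · exact weight_eq_card h0 ▸ hU.card_le_davC

theorem weight_le_davC_mul [Finite G] (hD : 2 ≤ DavC G) (hz : z ∈ ZB A) :
    weight G A ≤ DavC G * z.card := by
  rw [← hz.2, map_multiset_sum, mul_comm, ← smul_eq_mul, ← Multiset.card_map (weight G) z]
  exact Multiset.sum_le_card_nsmul _ _
    (Multiset.forall_mem_map_iff.2 fun U hU => (hz.1 U hU).weight_le_davC hD)

variable (G) in
/-- The sequences whose factorizations attain both bounds of `2 * |z| ≤ weight G A ≤ D(G) * |z|`.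
For `A ≠ 0` this is the condition `ρ(L(A)) = D(G) / 2`, see `rhoSet_LSet_eq_iff`; unlike the latter,
it is visibly closed under addition. -/
def extremalSubmonoid : AddSubmonoid (Multiset G) where
  carrier := {A | (∃ z ∈ ZB A, 2 * z.card = weight G A) ∧ ∃ z ∈ ZB A, DavC G * z.card = weight G A}
  zero_mem' := ⟨⟨0, zero_mem_ZB, by simp⟩, 0, zero_mem_ZB, by simp⟩
  add_mem' := by
    rintro A B ⟨⟨x, hx, hxA⟩, x', hx', hxA'⟩ ⟨⟨y, hy, hyB⟩, y', hy', hyB'⟩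
    refine ⟨⟨x + y, add_mem_ZB hx hy, ?_⟩, x' + y', add_mem_ZB hx' hy', ?_⟩
    · rw [Multiset.card_add, mul_add, hxA, hyB, map_add]
    · rw [Multiset.card_add, mul_add, hxA', hyB', map_add]

theorem sum_eq_zero_of_mem_extremalSubmonoid (hA : A ∈ extremalSubmonoid G) : A.sum = 0 :=
  let ⟨_, hz, _⟩ := hA.1
  sum_eq_zero_of_mem_ZB hz

theorem sInf_LSet_pos (hA : A.sum = 0) (hA0 : A ≠ 0) : 0 < sInf (LSet A) := by
  obtain ⟨z, hz, hzc⟩ := mem_LSet_iff.1 (Nat.sInf_mem (LSet_nonempty hA))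
  rw [← hzc, Multiset.card_pos]
  rintro rfl
  exact hA0 hz.2.symm

theorem rhoSet_LSet_zero : rhoSet (LSet (0 : Multiset G)) = 0 := by
  have h0 : sSup (LSet (0 : Multiset G)) = 0 := by
    obtain ⟨z, hz, hzc⟩ :=
      mem_LSet_iff.1 (Nat.sSup_mem (LSet_nonempty (G := G) Multiset.sum_zero) bddAbove_LSet)
    rw [← hzc, eq_zero_of_mem_ZB_zero hz, Multiset.card_zero]
  rw [rhoSet, h0, Nat.cast_zero, zero_div]

theorem ne_zero_of_rhoSet_LSet_ne_zero (hA : rhoSet (LSet A) ≠ 0) : A ≠ 0 := by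
  rintro rfl
  exact hA rhoSet_LSet_zero

theorem one_le_rhoSet_LSet (hA : A.sum = 0) (hA0 : A ≠ 0) : 1 ≤ rhoSet (LSet A) := by
  rw [rhoSet, one_le_div (by exact_mod_cast sInf_LSet_pos hA hA0), Nat.cast_le]
  exact le_csSup bddAbove_LSet (Nat.sInf_mem (LSet_nonempty hA))

theorem two_le_davC_of_rhoSet_LSet_eq [Finite G] (hA : A.sum = 0)
    (hrho : rhoSet (LSet A) = (DavC G : ℚ) / 2) : 2 ≤ DavC G := by
  have hD : (0 : ℚ) < DavC G / 2 := by
    have := one_le_davC (G := G)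
    positivity
  have h1 := one_le_rhoSet_LSet hA (ne_zero_of_rhoSet_LSet_ne_zero (hrho ▸ hD.ne'))
  rw [hrho, le_div_iff₀ two_pos, one_mul] at h1
  exact_mod_cast h1

theorem mem_extremalSubmonoid_iff [Finite G] (hD : 2 ≤ DavC G) (hA : A.sum = 0) :
    A ∈ extremalSubmonoid G ↔ 2 * sSup (LSet A) = DavC G * sInf (LSet A) := by
  obtain ⟨x, hx, hxmin⟩ := mem_LSet_iff.1 (Nat.sInf_mem (LSet_nonempty hA))
  obtain ⟨y, hy, hymax⟩ := mem_LSet_iff.1 (Nat.sSup_mem (LSet_nonempty hA) bddAbove_LSet)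
  have hwx := weight_le_davC_mul hD hx
  have hwy := two_mul_card_le_weight hy
  rw [← hxmin, ← hymax]
  refine ⟨fun ⟨⟨u, hu, huA⟩, v, hv, hvA⟩ => ?_, fun h => ⟨⟨y, hy, ?_⟩, x, hx, ?_⟩⟩
  · have huy : u.card ≤ y.card := hymax ▸ le_csSup bddAbove_LSet (mem_LSet_iff.2 ⟨u, hu, rfl⟩)
    have hxv : x.card ≤ v.card := hxmin ▸ Nat.sInf_le (mem_LSet_iff.2 ⟨v, hv, rfl⟩)
    have := Nat.mul_le_mul_left (DavC G) hxv
    omega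
  · omega
  · omega

theorem rhoSet_LSet_eq_iff [Finite G] (hD : 2 ≤ DavC G) (hA : A.sum = 0) :
    rhoSet (LSet A) = (DavC G : ℚ) / 2 ↔ A ≠ 0 ∧ A ∈ extremalSubmonoid G := by
  have hiff (hA0 : A ≠ 0) : rhoSet (LSet A) = (DavC G : ℚ) / 2 ↔ A ∈ extremalSubmonoid G := by
    have hpos : ((sInf (LSet A) : ℕ) : ℚ) ≠ 0 := by exact_mod_cast (sInf_LSet_pos hA hA0).ne'
    rw [mem_extremalSubmonoid_iff hD hA, rhoSet, div_eq_div_iff hpos two_ne_zero, mul_comm _ 2]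
    norm_cast
  refine ⟨fun h => ?_, fun h => (hiff h.1).2 h.2⟩
  have hD' : (DavC G : ℚ) / 2 ≠ 0 := by positivity
  have hA0 : A ≠ 0 := ne_zero_of_rhoSet_LSet_ne_zero (h ▸ hD')
  exact ⟨hA0, (hiff hA0).1 h⟩

theorem exists_mem_ZB_pair (g : G) : ∃ z ∈ ZB {g, -g}, 2 * z.card = weight G {g, -g} := by
  obtain rfl | hg := eq_or_ne g 0
  · exact ⟨{{0}, {0}}, by simp [ZB, IsMinZS.singleton_zero], by simp [weight]⟩
  obtain ⟨z, hz⟩ := exists_mem_ZB (A := {g, -g}) (by simp)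
  refine ⟨z, hz, (two_mul_card_le_weight hz).antisymm ?_⟩
  have hpos : 0 < z.card := Multiset.card_pos.2 <| by
    rintro rfl
    simpa using hz.2
  rw [weight_eq_card (by simp [eq_comm, hg])]
  simp only [Multiset.insert_eq_cons, Multiset.card_cons, Multiset.card_singleton]
  omega

theorem exists_mem_ZB_add_map_neg (A : Multiset G) :
    ∃ z ∈ ZB (A + A.map Neg.neg), 2 * z.card = weight G (A + A.map Neg.neg) := by
  induction A using Multiset.induction_on with
  | empty => exact ⟨0, zero_mem_ZB, by simp⟩
  | cons g A ih =>
    obtain ⟨z, hz, hzA⟩ := ih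
    obtain ⟨p, hp, hpg⟩ := exists_mem_ZB_pair g
    have hsplit : g ::ₘ A + (g ::ₘ A).map Neg.neg = {g, -g} + (A + A.map Neg.neg) := by
      simp [← Multiset.singleton_add, add_assoc, add_left_comm A]
    rw [hsplit]
    exact ⟨p + z, add_mem_ZB hp hz, by rw [Multiset.card_add, mul_add, hpg, hzA, ← map_add]⟩

theorem add_map_neg_mem_extremalSubmonoid (hU : IsMinZS U) (hD : 2 ≤ DavC G)
    (hcard : U.card = DavC G) : U + U.map Neg.neg ∈ extremalSubmonoid G := by
  refine ⟨exists_mem_ZB_add_map_neg U,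
    {U, U.map Neg.neg}, by simp [ZB, hU, hU.map_neg], ?_⟩
  have h0 : (0 : G) ∉ U := fun h0 => by
    rw [hU.eq_singleton_zero h0, Multiset.card_singleton] at hcard
    omega
  rw [weight_eq_card (by simpa using h0)]
  simp [hcard, mul_two]

theorem exists_isRich_mem_extremalSubmonoid [Finite G] [DecidableEq G] (hD : 2 ≤ DavC G)
    (hPstar : ∀ g : G, g ≠ 0 → ∃ A : Multiset G, IsMinZS A ∧ A.card = DavC G ∧ g ∈ A) (n : ℕ) :
    ∃ B ∈ extremalSubmonoid G, IsRich n B := by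
  have := Fintype.ofFinite G
  choose! U hU hcard hmem using hPstar
  refine ⟨∑ g ∈ Finset.univ.erase (0 : G), n • (U g + (U g).map Neg.neg),
    sum_mem fun g hg => nsmul_mem ?_ n, fun g hg => ?_⟩
  · have hg := Finset.ne_of_mem_erase hg
    exact add_map_neg_mem_extremalSubmonoid (hU g hg) hD (hcard g hg)
  · have hgU : n • (U g + (U g).map Neg.neg) ≤ _ :=
      Finset.single_le_sum (f := fun g => n • (U g + (U g).map Neg.neg))
        (fun _ _ => Multiset.zero_le _) (Finset.mem_erase.2 ⟨hg, Finset.mem_univ g⟩)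
    refine le_trans ?_ (Multiset.count_le_of_le g hgU)
    rw [Multiset.count_nsmul, Multiset.count_add]
    exact Nat.le_mul_of_pos_right n (Nat.add_pos_left (Multiset.count_pos.2 (hmem g hg)) _)

end Elasticity

theorem stmt15 {G : Type*} [AddCommGroup G] [Fintype G]
    (hPstar : ∀ g : G, g ≠ 0 →
      ∃ A : Multiset G, IsMinZS A ∧ A.card = DavC G ∧ g ∈ A) :
    ∃ Astar : Multiset G, Astar.sum = 0 ∧
      ∀ A : Multiset G, A.sum = 0 → rhoSet (LSet A) = (DavC G : ℚ) / 2 →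
        CatenaryLE (Astar + A) 3 ∧ IsIntervalSet (LSet (Astar + A)) ∧
        rhoSet (LSet (Astar + A)) = (DavC G : ℚ) / 2 := by
  classical
  by_cases hD : 2 ≤ DavC G
  · obtain ⟨n, hn⟩ := exists_forall_isRich_catenaryLE G
    obtain ⟨B, hB, hrich⟩ := exists_isRich_mem_extremalSubmonoid hD hPstar n
    refine ⟨B, sum_eq_zero_of_mem_extremalSubmonoid hB, fun A hA hrho => ?_⟩
    obtain ⟨hA0, hAmem⟩ := (rhoSet_LSet_eq_iff hD hA).1 hrho
    have hBA : B + A ∈ extremalSubmonoid G := add_mem hB hAmem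
    have hsum : (B + A).sum = 0 := sum_eq_zero_of_mem_extremalSubmonoid hBA
    have hcat : CatenaryLE (B + A) 3 := hn _ (hrich.mono le_rfl (Multiset.le_add_right B A))
    exact ⟨hcat, isIntervalSet_LSet hsum hcat,
      (rhoSet_LSet_eq_iff hD hsum).2 ⟨by simp [hA0], hBA⟩⟩
  · exact ⟨0, rfl, fun A hA hrho => absurd (two_le_davC_of_rhoSet_LSet_eq hA hrho) hD⟩
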